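/- arXiv:1509.01625 — 4 statements merged into one kernel-verified Lean document; each statement's English description precedes it below -/
import Mathlib

section
/- Let U ⊆ ℝ³ be open and let ω, n : U → ℝ³ be C¹ vector fields. Suppose x ∈ U is a point where div ω(x) = 0. Then Σᵢ Σⱼ nᵢ(x) nⱼ(x) ∂ᵢωⱼ(x) = [(n×∇)·(ω×n)](x) − (ω(x)·n(x))·(div n)(x) + (1/2)·ω(x)·∇(‖n‖²)(x), where ω×n is the pointwise cross product, ∇(‖n‖²) is the gradient of the scalar function x ↦ ‖n(x)‖², and for a C¹ vector field F the scalar (n×∇)·F at x is defined as Σᵢ Σⱼ Σₖ ε_{ijk} nⱼ(x) (∂ₖFᵢ)(x) with ε the Levi-Civita symbol. -/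
/-!
Expanding each component of `ω × n` by the product rule and contracting with
`∑ i, ε i j k * ε i a b = δ j a * δ k b - δ j b * δ k a` gives
`(n × ∇) · (ω × n) = ∑ n j * n k * ∂ k ω j + (ω · n) div n - ‖n‖² div ω - ∑ ω k * n j * ∂ k n j`.
The third term vanishes because `div ω = 0` at `x`, and the last is `-(1/2) ω · ∇ ‖n‖²`.
Once all derivatives are expanded, what remains is a polynomial identity in the components of
`ω x`, `n x` and their first partial derivatives.
-/

open scoped BigOperators

/-- Partial derivative in the `i`-th coordinate direction. -/
noncomputable def pd (i : Fin 3) (f : (Fin 3 → ℝ) → ℝ) (x : Fin 3 → ℝ) : ℝ :=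
  fderiv ℝ f x (Pi.single i 1)

/-- Pointwise cross product of two vectors in ℝ³. -/
def cross (a b : Fin 3 → ℝ) : Fin 3 → ℝ :=
  ![a 1 * b 2 - a 2 * b 1, a 2 * b 0 - a 0 * b 2, a 0 * b 1 - a 1 * b 0]

/-- The Levi-Civita symbol on three indices. -/
noncomputable def eps (i j k : Fin 3) : ℝ :=
  (((j : ℕ) : ℝ) - ((i : ℕ) : ℝ)) * (((k : ℕ) : ℝ) - ((j : ℕ) : ℝ)) *
    (((k : ℕ) : ℝ) - ((i : ℕ) : ℝ)) / 2

/-- For a C¹ vector field `F` and C¹ field `n`, the scalar `(n×∇)·F` at `x`. -/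
noncomputable def tangDiv (n F : (Fin 3 → ℝ) → (Fin 3 → ℝ)) (x : Fin 3 → ℝ) : ℝ :=
  ∑ i, ∑ j, ∑ k, eps i j k * n x j * pd k (fun y => F y i) x

lemma pd_mul_sub_mul (i : Fin 3) {a b c d : (Fin 3 → ℝ) → ℝ} {x : Fin 3 → ℝ}
    (ha : DifferentiableAt ℝ a x) (hb : DifferentiableAt ℝ b x)
    (hc : DifferentiableAt ℝ c x) (hd : DifferentiableAt ℝ d x) :
    pd i (fun y => a y * b y - c y * d y) x
      = a x * pd i b x + b x * pd i a x - (c x * pd i d x + d x * pd i c x) := by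
  have h := (ha.hasFDerivAt.mul hb.hasFDerivAt).sub (hc.hasFDerivAt.mul hd.hasFDerivAt)
  have e : fderiv ℝ (fun y => a y * b y - c y * d y) x = _ := h.fderiv
  simp [pd, e]

lemma pd_sum_sq (i : Fin 3) {n : (Fin 3 → ℝ) → (Fin 3 → ℝ)} {x : Fin 3 → ℝ}
    (hn : ∀ j, DifferentiableAt ℝ (fun y => n y j) x) :
    pd i (fun y => ∑ j, n y j ^ 2) x = ∑ j, 2 * n x j * pd i (fun y => n y j) x := by
  have h := HasFDerivAt.fun_sum (u := Finset.univ) fun j _ => (hn j).hasFDerivAt.pow 2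
  have e : fderiv ℝ (fun y => ∑ j, n y j ^ 2) x = _ := h.fderiv
  simp [pd, e]

theorem stmt0 (U : Set (Fin 3 → ℝ)) (hU : IsOpen U)
    (ω n : (Fin 3 → ℝ) → (Fin 3 → ℝ))
    (hω : ContDiffOn ℝ 1 ω U) (hn : ContDiffOn ℝ 1 n U)
    (x : Fin 3 → ℝ) (hx : x ∈ U)
    (hdiv : ∑ i, pd i (fun y => ω y i) x = 0) :
    ∑ i, ∑ j, n x i * n x j * pd i (fun y => ω y j) x
      = tangDiv n (fun y => cross (ω y) (n y)) x
        - (∑ i, ω x i * n x i) * (∑ i, pd i (fun y => n y i) x)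
        + (1 / 2) * ∑ i, ω x i * pd i (fun y => ∑ j, n y j ^ 2) x := by
  have dω : ∀ j, DifferentiableAt ℝ (fun y => ω y j) x := differentiableAt_pi.1
    ((hω.contDiffAt (hU.mem_nhds hx)).differentiableAt one_ne_zero)
  have dn : ∀ j, DifferentiableAt ℝ (fun y => n y j) x := differentiableAt_pi.1
    ((hn.contDiffAt (hU.mem_nhds hx)).differentiableAt one_ne_zero)
  have hc : ∀ (k p q : Fin 3), pd k (fun y => ω y p * n y q - ω y q * n y p) x
      = ω x p * pd k (fun y => n y q) x + n x q * pd k (fun y => ω y p) x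
        - (ω x q * pd k (fun y => n y p) x + n x p * pd k (fun y => ω y q) x) :=
    fun k p q => pd_mul_sub_mul k (dω p) (dn q) (dω q) (dn p)
  have h0 : ∀ y, cross (ω y) (n y) 0 = ω y 1 * n y 2 - ω y 2 * n y 1 := fun _ => rfl
  have h1 : ∀ y, cross (ω y) (n y) 1 = ω y 2 * n y 0 - ω y 0 * n y 2 := fun _ => rfl
  have h2 : ∀ y, cross (ω y) (n y) 2 = ω y 0 * n y 1 - ω y 1 * n y 0 := fun _ => rfl
  simp only [tangDiv, pd_sum_sq _ dn]
  simp only [Fin.sum_univ_three, h0, h1, h2, hc, eps, Fin.val_zero, Fin.val_one, Fin.val_two]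
    at hdiv ⊢
  push_cast
  -- The two sides differ by exactly `‖n‖² div ω`.
  linear_combination (n x 0 ^ 2 + n x 1 ^ 2 + n x 2 ^ 2) * hdiv
end

section
/- Let B₊ denote the open upper half unit ball in ℝ³, let m ∈ ℕ, and let β = (β₁,β₂,β₃) ∈ ℕ³ be a multi-index with β₁+β₂+β₃ ≤ m. Let f : ℝ³ → ℝ be of class C^{m+1} on an open neighborhood of the closure of B₊, with f(x₁,x₂,0) = 0 whenever (x₁,x₂,0) lies in the closure of B₊. Then for every x = (x₁,x₂,x₃) ∈ B₊ one has D^β(f/x₃)(x) = ∫₀¹ (D^β ∂₃ f)(x₁, x₂, t·x₃) dt, where f/x₃ denotes the function x ↦ f(x)/x₃ on B₊. -/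
/-!
On `Bplus`, the fundamental theorem of calculus along the vertical segment from `(x₁, x₂, 0)` to `x`
gives `f / x₃ = J (∂₃ f)`, where `J g x = ∫₀¹ g (x₁, x₂, t x₃) dt` (`div_eq_vAvg`). It remains to see
that `J` commutes with `∂₁`, `∂₂` and `x₃ ∂₃`. Differentiation under the integral sign
(`hasFDerivAt_vAvg`) reduces this to the same fact for the vertical scaling
`(x₁, x₂, x₃) ↦ (x₁, x₂, t x₃)`: it fixes the first two basis vectors, and multiplies both `e₃` and
the third coordinate by `t`. Regularity is only available on the neighbourhood `V`, and
equality only on the open set `Bplus`, so the induction on the order of the operator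
(`commutes_iterate`) carries both a `ContDiffOn` statement on `V` and an equality on `Bplus`.
-/

open scoped BigOperators

/-- Partial derivative in the `i`-th coordinate direction, as an operator on functions. -/
noncomputable def pdOp (i : Fin 3) (f : (Fin 3 → ℝ) → ℝ) : (Fin 3 → ℝ) → ℝ :=
  fun x => fderiv ℝ f x (Pi.single i 1)

/-- The conormal vector field `x₃ ∂₃`, as an operator on functions. -/
noncomputable def zOp (f : (Fin 3 → ℝ) → ℝ) : (Fin 3 → ℝ) → ℝ :=
  fun x => x 2 * fderiv ℝ f x (Pi.single 2 1)

/-- The conormal differential operator `D^β = ∂₁^{β₁} ∂₂^{β₂} (x₃∂₃)^{β₃}`. -/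
noncomputable def Dco (β : Fin 3 → ℕ) (f : (Fin 3 → ℝ) → ℝ) : (Fin 3 → ℝ) → ℝ :=
  (pdOp 0)^[β 0] ((pdOp 1)^[β 1] (zOp^[β 2] f))

/-- The open upper half unit ball in ℝ³. -/
def Bplus : Set (Fin 3 → ℝ) :=
  {x | x 0 ^ 2 + x 1 ^ 2 + x 2 ^ 2 < 1 ∧ 0 < x 2}


open Set MeasureTheory Topology

/-- The vertical scaling `(x₁, x₂, x₃) ↦ (x₁, x₂, t x₃)`, written as
`x + (t - 1) x₃ e₃` so that its continuity in `t` is immediate. -/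
noncomputable def vScale (t : ℝ) : (Fin 3 → ℝ) →L[ℝ] (Fin 3 → ℝ) :=
  ContinuousLinearMap.id ℝ _ +
    (t - 1) • (ContinuousLinearMap.proj (R := ℝ) (φ := fun _ : Fin 3 => ℝ) 2).smulRight
      (Pi.single 2 1 : Fin 3 → ℝ)

/-- The vertical average `J g x = ∫₀¹ g (x₁, x₂, t x₃) dt`. -/
noncomputable def vAvg (g : (Fin 3 → ℝ) → ℝ) (x : Fin 3 → ℝ) : ℝ :=
  ∫ t in (0 : ℝ)..1, g (vScale t x)

lemma vScale_apply (t : ℝ) (x : Fin 3 → ℝ) : vScale t x = ![x 0, x 1, t * x 2] := by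
  ext i
  fin_cases i <;> simp [vScale]
  ring

lemma continuous_vScale : Continuous vScale := by
  unfold vScale
  fun_prop

lemma continuous_vScale_apply : Continuous fun p : ℝ × (Fin 3 → ℝ) => vScale p.1 p.2 :=
  (continuous_vScale.comp continuous_fst).clm_apply continuous_snd

lemma isOpen_Bplus : IsOpen Bplus := by
  have h1 : IsOpen {x : Fin 3 → ℝ | x 0 ^ 2 + x 1 ^ 2 + x 2 ^ 2 < 1} :=
    isOpen_lt (by fun_prop) continuous_const
  have h2 : IsOpen {x : Fin 3 → ℝ | 0 < x 2} := isOpen_lt continuous_const (by fun_prop)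
  exact h1.inter h2

lemma vScale_mem_closure {x : Fin 3 → ℝ} (hx : x ∈ Bplus) {t : ℝ} (ht : t ∈ Icc (0 : ℝ) 1) :
    vScale t x ∈ closure Bplus := by
  have hc : Continuous fun t : ℝ => vScale t x := continuous_vScale.clm_apply continuous_const
  -- The endpoint `t = 0` lands on the flat boundary, hence the passage to closures.
  have ht' : t ∈ closure (Ioc (0 : ℝ) 1) := by rwa [closure_Ioc (by norm_num)]
  refine map_mem_closure (f := fun t : ℝ => vScale t x) hc ht' ?_
  rintro s ⟨hs0, hs1⟩
  obtain ⟨h1, h2⟩ := hx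
  beta_reduce
  rw [vScale_apply]
  refine ⟨?_, by simpa using mul_pos hs0 h2⟩
  have : (s * x 2) ^ 2 ≤ x 2 ^ 2 := by
    apply pow_le_pow_left₀ (by positivity)
    nlinarith
  simp
  linarith

lemma continuousOn_comp_vScale {E : Type*} [TopologicalSpace E] {V : Set (Fin 3 → ℝ)}
    (hBV : closure Bplus ⊆ V) {g : (Fin 3 → ℝ) → E} (hg : ContinuousOn g V) :
    ContinuousOn (fun p : ℝ × (Fin 3 → ℝ) => g (vScale p.1 p.2)) (Icc 0 1 ×ˢ Bplus) :=
  hg.comp continuous_vScale_apply.continuousOn fun _ hp => hBV (vScale_mem_closure hp.2 hp.1)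

lemma continuousOn_slice {E : Type*} [TopologicalSpace E] {G : ℝ × (Fin 3 → ℝ) → E}
    (hG : ContinuousOn G (Icc 0 1 ×ˢ Bplus)) {x : Fin 3 → ℝ} (hx : x ∈ Bplus) :
    ContinuousOn (fun t => G (t, x)) (uIcc (0 : ℝ) 1) := by
  rw [uIcc_of_le zero_le_one]
  exact hG.comp (by fun_prop) fun t ht => ⟨ht, hx⟩

section

variable {V : Set (Fin 3 → ℝ)} {g : (Fin 3 → ℝ) → ℝ} {x : Fin 3 → ℝ}

lemma continuousOn_fderiv_vScale (hV : IsOpen V) (hBV : closure Bplus ⊆ V)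
    (hg : ContDiffOn ℝ 1 g V) :
    ContinuousOn (fun p : ℝ × (Fin 3 → ℝ) => (fderiv ℝ g (vScale p.1 p.2)).comp (vScale p.1))
      (Icc 0 1 ×ˢ Bplus) :=
  (continuousOn_comp_vScale hBV (hg.continuousOn_fderiv_of_isOpen hV le_rfl)).clm_comp
    (continuous_vScale.comp continuous_fst).continuousOn

lemma hasFDerivAt_vAvg (hV : IsOpen V) (hBV : closure Bplus ⊆ V)
    (hg : ContDiffOn ℝ 1 g V) (hx : x ∈ Bplus) :
    HasFDerivAt (vAvg g)
      (∫ t in (0 : ℝ)..1, (fderiv ℝ g (vScale t x)).comp (vScale t)) x := by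
  have hG := continuousOn_comp_vScale hBV hg.continuousOn
  have hG' := continuousOn_fderiv_vScale hV hBV hg
  obtain ⟨ε, hε, hεB⟩ := Metric.nhds_basis_closedBall.mem_iff.1 (isOpen_Bplus.mem_nhds hx)
  -- The dominating constant comes from compactness of `[0, 1] × closedBall x ε`.
  obtain ⟨C, hC⟩ := (isCompact_Icc.prod (isCompact_closedBall x ε)).exists_bound_of_continuousOn
    (hG'.mono (prod_mono_right hεB))
  have hI : ∀ t, t ∈ uIoc (0 : ℝ) 1 → t ∈ Icc (0 : ℝ) 1 := fun t ht => by
    rw [uIoc_of_le zero_le_one] at ht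
    exact Ioc_subset_Icc_self ht
  refine intervalIntegral.hasFDerivAt_integral_of_dominated_of_fderiv_le
    (F := fun y t => g (vScale t y))
    (F' := fun y t => (fderiv ℝ g (vScale t y)).comp (vScale t)) (bound := fun _ => C)
    (Metric.closedBall_mem_nhds x hε) ?_ (continuousOn_slice hG hx).intervalIntegrable
    (continuousOn_slice hG' hx).intervalIntegrable.aestronglyMeasurable_restrict_uIoc
    ?_ (by simp) ?_
  · filter_upwards [isOpen_Bplus.mem_nhds hx] with y hy
    exact (continuousOn_slice hG hy).intervalIntegrable.aestronglyMeasurable_restrict_uIoc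
  · exact ae_of_all _ fun t ht y hy => hC (t, y) ⟨hI t ht, hy⟩
  · refine ae_of_all _ fun t ht y hy => ?_
    have hmem := hBV (vScale_mem_closure (hεB hy) (hI t ht))
    have hd := ((hg.differentiableOn one_ne_zero).differentiableAt (hV.mem_nhds hmem)).hasFDerivAt
    exact hd.comp y (vScale t).hasFDerivAt

lemma fderiv_vAvg_apply (hV : IsOpen V) (hBV : closure Bplus ⊆ V)
    (hg : ContDiffOn ℝ 1 g V) (hx : x ∈ Bplus) (v : Fin 3 → ℝ) :
    fderiv ℝ (vAvg g) x v = ∫ t in (0 : ℝ)..1, fderiv ℝ g (vScale t x) (vScale t v) := by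
  rw [(hasFDerivAt_vAvg hV hBV hg hx).fderiv, ContinuousLinearMap.intervalIntegral_apply]
  · rfl
  · exact (continuousOn_slice (continuousOn_fderiv_vScale hV hBV hg) hx).intervalIntegrable

/-- The fundamental theorem of calculus along the vertical segment below `x`. -/
lemma div_eq_vAvg (hV : IsOpen V) (hBV : closure Bplus ⊆ V) (hg : ContDiffOn ℝ 1 g V)
    (hbd : ∀ a b : ℝ, (![a, b, 0] : Fin 3 → ℝ) ∈ closure Bplus → g ![a, b, 0] = 0)
    (hx : x ∈ Bplus) : g x / x 2 = vAvg (pdOp 2 g) x := by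
  have hx2 : x 2 ≠ 0 := hx.2.ne'
  have hcont : ContinuousOn (pdOp 2 g) V :=
    (hg.continuousOn_fderiv_of_isOpen hV le_rfl).clm_apply continuousOn_const
  have hint := (continuousOn_slice (continuousOn_comp_vScale hBV hcont) hx).intervalIntegrable
    (μ := volume)
  have hder : ∀ t ∈ uIcc (0 : ℝ) 1, HasDerivAt (fun t => g (vScale t x))
      (x 2 * pdOp 2 g (vScale t x)) t := by
    intro t ht
    rw [uIcc_of_le zero_le_one] at ht
    have hmem := hBV (vScale_mem_closure hx ht)
    have hd := ((hg.differentiableOn one_ne_zero).differentiableAt (hV.mem_nhds hmem)).hasFDerivAt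
    have hs : HasDerivAt (fun t => vScale t x) (x 2 • (Pi.single 2 1 : Fin 3 → ℝ)) t := by
      have := (((hasDerivAt_id t).sub_const 1).smul_const
        (x 2 • (Pi.single 2 1 : Fin 3 → ℝ))).const_add x
      simpa [vScale] using this
    have := hd.comp_hasDerivAt t hs
    rwa [map_smul, smul_eq_mul] at this
  have key := intervalIntegral.integral_eq_sub_of_hasDerivAt hder (hint.const_mul _)
  have h0 : g (vScale 0 x) = 0 := by
    have hm := vScale_mem_closure hx (left_mem_Icc.2 zero_le_one)
    rw [vScale_apply, zero_mul] at hm ⊢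
    exact hbd _ _ hm
  have h1 : vScale 1 x = x := by simp [vScale]
  rw [intervalIntegral.integral_const_mul, h0, h1, sub_zero] at key
  rw [← key, mul_div_cancel_left₀ _ hx2, vAvg]

end

/-- What the induction needs about a first-order operator `L`: it loses one derivative on `V`,
it acts locally on `Bplus`, and it commutes there with the vertical average. -/
structure CommutesWithAvg (V : Set (Fin 3 → ℝ))
    (L : ((Fin 3 → ℝ) → ℝ) → (Fin 3 → ℝ) → ℝ) : Prop where
  contDiffOn : ∀ (n : ℕ) (g : (Fin 3 → ℝ) → ℝ),
    ContDiffOn ℝ (n + 1 : ℕ) g V → ContDiffOn ℝ n (L g) V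
  eqOn : ∀ u v : (Fin 3 → ℝ) → ℝ, EqOn u v Bplus → EqOn (L u) (L v) Bplus
  vAvg : ∀ g : (Fin 3 → ℝ) → ℝ, ContDiffOn ℝ 1 g V → EqOn (L (vAvg g)) (vAvg (L g)) Bplus

lemma fderiv_eq_of_eqOn_Bplus {u v : (Fin 3 → ℝ) → ℝ} (h : EqOn u v Bplus) {x : Fin 3 → ℝ}
    (hx : x ∈ Bplus) : fderiv ℝ u x = fderiv ℝ v x :=
  (h.eventuallyEq_of_mem (isOpen_Bplus.mem_nhds hx)).fderiv_eq

lemma contDiffOn_pdOp {V : Set (Fin 3 → ℝ)} (hV : IsOpen V) (i : Fin 3) (n : ℕ)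
    (g : (Fin 3 → ℝ) → ℝ) (hg : ContDiffOn ℝ (n + 1 : ℕ) g V) : ContDiffOn ℝ n (pdOp i g) V :=
  (hg.fderiv_of_isOpen hV (by norm_cast)).clm_apply contDiffOn_const

lemma commutes_pdOp {V : Set (Fin 3 → ℝ)} (hV : IsOpen V) (hBV : closure Bplus ⊆ V) {i : Fin 3}
    (hi : i ≠ 2) : CommutesWithAvg V (pdOp i) where
  contDiffOn := contDiffOn_pdOp hV i
  eqOn u v h x hx := by simp only [pdOp, fderiv_eq_of_eqOn_Bplus h hx]
  vAvg g hg x hx := by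
    have hs : ∀ t, vScale t (Pi.single i 1) = Pi.single i 1 := fun t => by
      simp [vScale, hi.symm]
    simp only [pdOp, fderiv_vAvg_apply hV hBV hg hx, hs, _root_.vAvg]

lemma commutes_zOp {V : Set (Fin 3 → ℝ)} (hV : IsOpen V) (hBV : closure Bplus ⊆ V) :
    CommutesWithAvg V zOp where
  contDiffOn n g hg :=
    (contDiff_apply ℝ ℝ (2 : Fin 3)).contDiffOn.mul (contDiffOn_pdOp hV 2 n g hg)
  eqOn u v h x hx := by simp only [zOp, fderiv_eq_of_eqOn_Bplus h hx]
  vAvg g hg x hx := by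
    have hs : ∀ t, vScale t (Pi.single 2 1) = t • (Pi.single 2 1 : Fin 3 → ℝ) := fun t => by
      simp [vScale, sub_smul]
    have h2 : ∀ t, vScale t x 2 = t * x 2 := fun t => by simp [vScale_apply]
    simp only [zOp, fderiv_vAvg_apply hV hBV hg hx, hs, _root_.vAvg, h2, map_smul, smul_eq_mul,
      ← intervalIntegral.integral_const_mul]
    congr 1
    ext t
    ring

lemma commutes_iterate {V : Set (Fin 3 → ℝ)} {L : ((Fin 3 → ℝ) → ℝ) → (Fin 3 → ℝ) → ℝ}
    (hL : CommutesWithAvg V L) {u g : (Fin 3 → ℝ) → ℝ} (hu : EqOn u (vAvg g) Bplus) (k : ℕ) :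
    ∀ n : ℕ, ContDiffOn ℝ (n + k : ℕ) g V →
      ContDiffOn ℝ n (L^[k] g) V ∧ EqOn (L^[k] u) (vAvg (L^[k] g)) Bplus := by
  induction k with
  | zero => exact fun n hg => ⟨hg, hu⟩
  | succ k ih =>
    intro n hg
    obtain ⟨h1, h2⟩ := ih (n + 1) (by rwa [add_right_comm, add_assoc])
    simp only [Function.iterate_succ_apply']
    exact ⟨hL.contDiffOn _ _ h1, (hL.eqOn _ _ h2).trans (hL.vAvg _ (h1.of_le (by simp)))⟩

theorem stmt3 (m : ℕ) (β : Fin 3 → ℕ) (hβ : β 0 + β 1 + β 2 ≤ m)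
    (f : (Fin 3 → ℝ) → ℝ)
    (V : Set (Fin 3 → ℝ)) (hV : IsOpen V) (hBV : closure Bplus ⊆ V)
    (hf : ContDiffOn ℝ (m + 1) f V)
    (hbd : ∀ a b : ℝ, (![a, b, 0] : Fin 3 → ℝ) ∈ closure Bplus → f ![a, b, 0] = 0)
    (x : Fin 3 → ℝ) (hx : x ∈ Bplus) :
    Dco β (fun y => f y / y 2) x
      = ∫ t in (0 : ℝ)..1, Dco β (pdOp 2 f) ![x 0, x 1, t * x 2] := by
  have hf' : ContDiffOn ℝ (m + 1 : ℕ) f V := by exact_mod_cast hf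
  have hu : EqOn (fun y => f y / y 2) (vAvg (pdOp 2 f)) Bplus := fun y hy =>
    div_eq_vAvg hV hBV (hf'.of_le (by simp)) hbd hy
  have hg : ContDiffOn ℝ (0 + β 0 + β 1 + β 2 : ℕ) (pdOp 2 f) V :=
    (contDiffOn_pdOp hV 2 m f hf').of_le (by rw [zero_add]; exact_mod_cast hβ)
  obtain ⟨g2, h2⟩ := commutes_iterate (commutes_zOp hV hBV) hu (β 2) _ hg
  obtain ⟨g1, h1⟩ := commutes_iterate (commutes_pdOp hV hBV (i := 1) (by decide)) h2 (β 1) _ g2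
  obtain ⟨-, h0⟩ := commutes_iterate (commutes_pdOp hV hBV (i := 0) (by decide)) h1 (β 0) _ g1
  simpa only [vAvg, vScale_apply, Dco] using h0 hx
end

section
/- Let U ⊆ ℝ³ be open and let u, n : U → ℝ³ be C¹ vector fields. Then at every point x ∈ U the first component of the directional derivative of n×u in direction n satisfies [n·∇(n×u)]₁(x) = [(n·∇n)×u]₁(x) + Σᵢ nᵢ(x)·([(n₂(x)∂ᵢ − nᵢ(x)∂₂)u₃](x) − [(n₃(x)∂ᵢ − nᵢ(x)∂₃)u₂](x)) + ‖n(x)‖²·(curl u)₁(x), where n×u is the pointwise cross product, n·∇ = Σᵢ nᵢ∂ᵢ, (n·∇n)ⱼ = Σᵢ nᵢ∂ᵢnⱼ, and (curl u)₁ = ∂₂u₃ − ∂₃u₂. -/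
/-!
The Leibniz rule gives `∂ᵢ(n × u)₁ = n₂ ∂ᵢu₃ + u₃ ∂ᵢn₂ - n₃ ∂ᵢu₂ - u₂ ∂ᵢn₃` (`pd_cross_zero`).
After multiplying by `nᵢ` and summing, the derivatives of `n` assemble into `((n·∇n) × u)₁`.
In the derivatives of `u`, adding and subtracting `nᵢ² (∂₂u₃ - ∂₃u₂)` splits off the
vorticity term, and what remains are the tangential derivatives: a ring identity.
-/

open scoped BigOperators

/-- Leibniz rule for the first component of a cross product: `∂ᵢ(n × u)₁` in terms of the
partial derivatives of the components. -/
theorem pd_cross_zero {u n : (Fin 3 → ℝ) → (Fin 3 → ℝ)} {x : Fin 3 → ℝ}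
    (hu : DifferentiableAt ℝ u x) (hn : DifferentiableAt ℝ n x) (i : Fin 3) :
    pd i (fun y => cross (n y) (u y) 0) x
      = (n x 1 * pd i (fun y => u y 2) x + u x 2 * pd i (fun y => n y 1) x)
        - (n x 2 * pd i (fun y => u y 1) x + u x 1 * pd i (fun y => n y 2) x) := by
  have hu' := fun j => ((differentiableAt_pi.1 hu) j).hasFDerivAt
  have hn' := fun j => ((differentiableAt_pi.1 hn) j).hasFDerivAt
  have h := (((hn' 1).mul (hu' 2)).sub ((hn' 2).mul (hu' 1))).fderiv
  have h' := congrArg (fun L => L (Pi.single i 1)) h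
  exact h'

theorem stmt7 (U : Set (Fin 3 → ℝ)) (hU : IsOpen U)
    (u n : (Fin 3 → ℝ) → (Fin 3 → ℝ))
    (hu : ContDiffOn ℝ 1 u U) (hn : ContDiffOn ℝ 1 n U)
    (x : Fin 3 → ℝ) (hx : x ∈ U) :
    ∑ i, n x i * pd i (fun y => cross (n y) (u y) 0) x
      = cross (fun j => ∑ i, n x i * pd i (fun y => n y j) x) (u x) 0
        + (∑ i, n x i *
            ((n x 1 * pd i (fun y => u y 2) x - n x i * pd 1 (fun y => u y 2) x)
              - (n x 2 * pd i (fun y => u y 1) x - n x i * pd 2 (fun y => u y 1) x)))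
        + (∑ i, n x i ^ 2) *
            (pd 1 (fun y => u y 2) x - pd 2 (fun y => u y 1) x) := by
  have hU' := hU.mem_nhds hx
  have hu' := (hu.contDiffAt hU').differentiableAt one_ne_zero
  have hn' := (hn.contDiffAt hU').differentiableAt one_ne_zero
  simp only [pd_cross_zero hu' hn']
  simp only [cross, Fin.sum_univ_three, Matrix.cons_val_zero]
  ring
end

section
/- There exists a constant C > 0 with the following property: for every compactly supported C² function f : ℝ³ → ℝ, writing H = {x ∈ ℝ³ : x₃ > 0} for the open upper half-space, one has sup_{x ∈ H} |f(x)| ≤ C·( ‖f‖_{L²(H)} + Σ_{i=1}^{3} ‖∂ᵢf‖_{L²(H)} + Σ_{i ∈ {1,2}} Σ_{j=1}^{3} ‖∂ⱼ∂ᵢf‖_{L²(H)} ), where ‖g‖_{L²(H)} = (∫_H |g|²)^{1/2}. -/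
/-!
The value `f x` is represented by averages over the cubes `x + r [0,1]³`, `0 < r ≤ 1`, which lie
in the half-space, and each average is estimated by Cauchy–Schwarz.

Write `flat y = (y₁, y₂, 0)`. Since `flat y` is horizontal, the fundamental theorem of calculus
along `r ↦ x + r flat y` gives `f x` as the mean of `f (x + flat y)` minus integrals over `r` of
the averages of `yᵢ ∂ᵢf (x + r flat y)` with `i` horizontal (`eq_integral_flat`). Moving along
horizontal rays keeps `∂₃f` out of this step, so that `∂₃∂₃f`, which the right-hand side does not
control, never appears. Averages over horizontal squares become averages over cubes at the cost of
a term with a factor `r` and one vertical derivative (`integral_flat_eq`), and `∫₀¹` of the averages of `∂ᵢf` becomes the average at scale `1`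
plus `∫₀¹ r · (averages of ∂ⱼ∂ᵢf) dr` (`integral_cubeAvg_eq`).

By Cauchy–Schwarz and scaling, an average over a cube of side `r` is at most `r^(-3/2)` times the
`L²` norm (`abs_cubeAvg_le`), and `∫₀¹ r · r^(-3/2) dr = 2`, so every term is controlled by the
`L²` norms of `f`, its first derivatives, and `∂ⱼ∂ᵢf` with `i` horizontal.
-/

open scoped BigOperators
open MeasureTheory

/-- The open upper half-space in ℝ³. -/
def upperHalf : Set (Fin 3 → ℝ) := {x | 0 < x 2}

/-- The L² norm of a function over the upper half-space. -/
noncomputable def L2H (g : (Fin 3 → ℝ) → ℝ) : ℝ :=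
  Real.sqrt (∫ x in upperHalf, (g x) ^ 2)

/-! ### The unit cube and partial derivatives -/

/-- The closed unit cube `[0,1]³`. -/
def unitCube : Set (Fin 3 → ℝ) := Set.Icc 0 1

/-- The orthogonal projection of `ℝ³` onto the horizontal plane `{y₃ = 0}`. -/
def flat (y : Fin 3 → ℝ) : Fin 3 → ℝ := Function.update y 2 0

/-- The weighted average `∫_{[0,1]³} w(y) h(x + r y) dy` of `h` over the cube of side `r` with
lowest corner `x`. -/
noncomputable def cubeAvg (x : Fin 3 → ℝ) (w h : (Fin 3 → ℝ) → ℝ) (r : ℝ) : ℝ :=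
  ∫ y in unitCube, w y * h (x + r • y)

lemma isCompact_unitCube : IsCompact unitCube := isCompact_Icc

lemma measurableSet_unitCube : MeasurableSet unitCube := measurableSet_Icc

lemma volume_unitCube : volume unitCube = 1 := by
  simp [unitCube, Real.volume_Icc_pi]

lemma continuous_flat : Continuous flat := by
  unfold flat; fun_prop

lemma integrableOn_unitCube {F : (Fin 3 → ℝ) → ℝ} (hF : Continuous F) :
    IntegrableOn F unitCube :=
  hF.continuousOn.integrableOn_compact isCompact_unitCube

lemma pd_continuous {h : (Fin 3 → ℝ) → ℝ} (hh : ContDiff ℝ 1 h) (j : Fin 3) :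
    Continuous (pd j h) :=
  (hh.continuous_fderiv (by simp)).clm_apply continuous_const

lemma pd_contDiff {f : (Fin 3 → ℝ) → ℝ} (hf : ContDiff ℝ 2 f) (j : Fin 3) :
    ContDiff ℝ 1 (pd j f) :=
  (hf.fderiv_right (m := 1) (by norm_num)).clm_apply contDiff_const

lemma pd_hasCompactSupport {h : (Fin 3 → ℝ) → ℝ} (hc : HasCompactSupport h) (j : Fin 3) :
    HasCompactSupport (pd j h) :=
  hc.fderiv_apply ℝ _

lemma fderiv_eq_sum_pd (h : (Fin 3 → ℝ) → ℝ) (p v : Fin 3 → ℝ) :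
    fderiv ℝ h p v = ∑ j, v j * pd j h p := by
  conv_lhs => rw [pi_eq_sum_univ' v]
  simp [pd, map_sum]

lemma hasDerivAt_comp_line {h : (Fin 3 → ℝ) → ℝ} (hh : ContDiff ℝ 1 h) (x v : Fin 3 → ℝ) (r : ℝ) :
    HasDerivAt (fun r : ℝ => h (x + r • v)) (∑ j, v j * pd j h (x + r • v)) r := by
  rw [← fderiv_eq_sum_pd]
  have h1 : HasDerivAt (fun r : ℝ => x + r • v) v r := by
    simpa using ((hasDerivAt_id r).smul_const v).const_add x
  exact ((hh.differentiable (by simp)) _).hasFDerivAt.comp_hasDerivAt r h1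

/-! ### Fubini on the cube -/

/-- Fubini in the vertical variable: two continuous functions with the same integrals over
the vertical fibres of the cube have the same integral over the cube. -/
lemma setIntegral_unitCube_congr {F G : (Fin 3 → ℝ) → ℝ} (hF : Continuous F) (hG : Continuous G)
    (h : ∀ y : Fin 3 → ℝ, ∫ s in (0:ℝ)..1, F (Function.update y 2 s) =
      ∫ s in (0:ℝ)..1, G (Function.update y 2 s)) :
    ∫ y in unitCube, F y = ∫ y in unitCube, G y := by
  have key : ∀ {F : (Fin 3 → ℝ) → ℝ}, Continuous F → ∫ y in unitCube, F y =
      ∫ z in (Set.Icc 0 1 : Set (Fin 2 → ℝ)), ∫ s in (0:ℝ)..1,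
        F ((2 : Fin 3).insertNth s z) := by
    intro F hF
    let e := (MeasurableEquiv.piFinSuccAbove (fun _ : Fin 3 => ℝ) 2).symm
    have he : MeasurePreserving e :=
      (volume_preserving_piFinSuccAbove (fun _ : Fin 3 => ℝ) 2).symm _
    have hval : ∀ p : ℝ × (Fin 2 → ℝ), e p = (2 : Fin 3).insertNth p.1 p.2 := fun p => rfl
    have hcont : Continuous e := by
      have : (e : ℝ × (Fin 2 → ℝ) → (Fin 3 → ℝ)) = fun p => (2 : Fin 3).insertNth p.1 p.2 := rfl
      rw [this]
      exact Continuous.finInsertNth 2 continuous_fst continuous_snd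
    have hpre : e ⁻¹' unitCube = Set.Icc (0:ℝ) 1 ×ˢ (Set.Icc 0 1 : Set (Fin 2 → ℝ)) := by
      ext p
      simp only [Set.mem_preimage, hval, unitCube, Set.mem_prod]
      rw [Fin.insertNth_mem_Icc]
      rfl
    have hint : IntegrableOn (fun p => F (e p))
        (Set.Icc (0:ℝ) 1 ×ˢ (Set.Icc 0 1 : Set (Fin 2 → ℝ))) (volume.prod volume) :=
      (hF.comp hcont).continuousOn.integrableOn_compact (isCompact_Icc.prod isCompact_Icc)
    rw [← he.setIntegral_preimage_emb e.measurableEmbedding, hpre, Measure.volume_eq_prod]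
    rw [IntegrableOn, ← Measure.prod_restrict] at hint
    rw [← Measure.prod_restrict, integral_prod_symm _ hint]
    refine integral_congr_ae (Filter.Eventually.of_forall fun z => ?_)
    simp only [hval]
    rw [intervalIntegral.integral_of_le zero_le_one, integral_Icc_eq_integral_Ioc]
  rw [key hF, key hG]
  refine integral_congr_ae (Filter.Eventually.of_forall fun z => ?_)
  have := h ((2 : Fin 3).insertNth 0 z)
  simpa using this

/-- Fubini for the cube and the scale variable. -/
lemma unitCube_interval_swap {F : ℝ → (Fin 3 → ℝ) → ℝ}
    (hF : Continuous (Function.uncurry F)) :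
    ∫ r in (0:ℝ)..1, ∫ y in unitCube, F r y = ∫ y in unitCube, ∫ r in (0:ℝ)..1, F r y := by
  simp_rw [intervalIntegral.integral_of_le (zero_le_one' ℝ)]
  refine integral_integral_swap ?_
  rw [Measure.prod_restrict]
  exact (hF.continuousOn.integrableOn_compact
    (isCompact_Icc.prod isCompact_unitCube)).mono_set
      (Set.prod_mono Set.Ioc_subset_Icc_self le_rfl)

/-! ### Scaling bounds for cube averages -/

lemma continuous_cubeAvg (x : Fin 3 → ℝ) {w h : (Fin 3 → ℝ) → ℝ} (hw : Continuous w)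
    (hh : Continuous h) : Continuous (cubeAvg x w h) :=
  continuous_parametric_integral_of_continuous (f := fun r y => w y * h (x + r • y))
    (by simp only [Function.uncurry_def]; fun_prop) isCompact_unitCube

open scoped Pointwise in
/-- The scaling bound: by Cauchy–Schwarz and the change of variables `z = x + r y`, the average
of `h` over a cube of side `r` inside the half-space is at most `r^(-3/2)` times its `L²` norm. -/
lemma abs_cubeAvg_le {x : Fin 3 → ℝ} (hx : x ∈ upperHalf) {w h : (Fin 3 → ℝ) → ℝ}
    (hw : Continuous w) (hw1 : ∀ y ∈ unitCube, |w y| ≤ 1) (hh : Continuous h)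
    (hc : HasCompactSupport h) {r : ℝ} (hr : 0 < r) :
    |cubeAvg x w h r| ≤ r ^ (-(3/2) : ℝ) * L2H h := by
  have hcsq : HasCompactSupport (fun z => h z ^ 2) :=
    hc.comp_left (g := fun t : ℝ => t ^ 2) (by simp)
  have hhsq : Integrable (fun z => h z ^ 2) :=
    Continuous.integrable_of_hasCompactSupport (by fun_prop) hcsq
  have hmeas : MeasurableSet upperHalf :=
    measurableSet_lt measurable_const (measurable_pi_apply 2)
  have hcs : cubeAvg x w h r ^ 2 ≤ ∫ y in unitCube, (w y * h (x + r • y)) ^ 2 := by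
    set u : (Fin 3 → ℝ) → ℝ := fun y => w y * h (x + r • y) with hu
    have huc : Continuous u := by fun_prop
    set m := cubeAvg x w h r with hm
    have hm' : ∫ y in unitCube, u y = m := rfl
    -- The cube has volume one, so this is the nonnegativity of the variance of `u`.
    have h0 : 0 ≤ ∫ y in unitCube, (u y - m) ^ 2 := integral_nonneg fun y => sq_nonneg _
    have h1 : ∫ y in unitCube, (u y - m) ^ 2 = (∫ y in unitCube, u y ^ 2) - m ^ 2 := by
      have : ∀ y, (u y - m) ^ 2 = u y ^ 2 - (2 * m * u y - m ^ 2) := fun y => by ring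
      simp_rw [this]
      rw [integral_sub, integral_sub, integral_const_mul, hm']
      · simp [measureReal_def, volume_unitCube]; ring
      · exact integrableOn_unitCube (by fun_prop)
      · exact integrableOn_unitCube (by fun_prop)
      · exact integrableOn_unitCube (by fun_prop)
      · exact integrableOn_unitCube (by fun_prop)
    linarith
  have hw2 : ∫ y in unitCube, (w y * h (x + r • y)) ^ 2 ≤
      ∫ y in unitCube, (h (x + r • y)) ^ 2 := by
    refine setIntegral_mono_on (integrableOn_unitCube (by fun_prop))
      (integrableOn_unitCube (by fun_prop)) measurableSet_unitCube fun y hy => ?_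
    rw [mul_pow]
    have : w y ^ 2 ≤ 1 := by rw [sq_le_one_iff_abs_le_one]; exact hw1 y hy
    nlinarith [sq_nonneg (h (x + r • y))]
  have hscale : ∫ y in unitCube, (h (x + r • y)) ^ 2 =
      (r ^ 3)⁻¹ * ∫ z in r • unitCube, (h (x + z)) ^ 2 := by
    have := Measure.setIntegral_comp_smul_of_pos volume (fun z => (h (x + z)) ^ 2) unitCube hr
    simpa using this
  have htrans : ∫ z in r • unitCube, (h (x + z)) ^ 2 ≤ ∫ z in upperHalf, (h z) ^ 2 := by
    have hmp := measurePreserving_add_left (volume : Measure (Fin 3 → ℝ)) x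
    rw [← hmp.setIntegral_preimage_emb (measurableEmbedding_addLeft x) (fun z => h z ^ 2)]
    refine setIntegral_mono_set ?_ (Filter.Eventually.of_forall fun z => sq_nonneg _) ?_
    · exact (hmp.integrable_comp_of_integrable hhsq).integrableOn
    · refine Filter.Eventually.of_forall (Set.smul_set_subset_iff.2 fun y hy => ?_)
      have h1 : 0 ≤ y 2 := hy.1 2
      have h2 : 0 < x 2 := hx
      change 0 < (x + r • y) 2
      simp only [Pi.add_apply, Pi.smul_apply, smul_eq_mul]
      positivity
  have hfin : cubeAvg x w h r ^ 2 ≤ (r ^ (-(3/2) : ℝ) * L2H h) ^ 2 := by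
    have hr2 : (r ^ (-(3/2) : ℝ)) ^ 2 = (r ^ 3)⁻¹ := by
      rw [← Real.rpow_natCast, ← Real.rpow_mul hr.le, ← Real.rpow_natCast r 3,
        ← Real.rpow_neg hr.le]
      norm_num
    rw [mul_pow, hr2, L2H, Real.sq_sqrt (integral_nonneg fun z => sq_nonneg _)]
    refine (hcs.trans (hw2.trans hscale.le)).trans ?_
    gcongr
  exact abs_le_of_sq_le_sq hfin (mul_nonneg (by positivity) (Real.sqrt_nonneg _))

/-- The exponent count on which the estimate rests: `r · r^(-3/2)` is integrable at `0`. -/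
lemma abs_integral_cubeAvg_le {x : Fin 3 → ℝ} (hx : x ∈ upperHalf) {w h : (Fin 3 → ℝ) → ℝ}
    (hw : Continuous w) (hw1 : ∀ y ∈ unitCube, |w y| ≤ 1) (hh : Continuous h)
    (hc : HasCompactSupport h) :
    |∫ r in (0:ℝ)..1, r * cubeAvg x w h r| ≤ 2 * L2H h := by
  have hb : ∀ r ∈ Set.Ioc (0:ℝ) 1, ‖r * cubeAvg x w h r‖ ≤ r ^ (-(1/2) : ℝ) * L2H h := by
    intro r hr
    rw [norm_mul, Real.norm_eq_abs, Real.norm_eq_abs, abs_of_pos hr.1]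
    have hA := mul_le_mul_of_nonneg_left (abs_cubeAvg_le hx hw hw1 hh hc hr.1) hr.1.le
    have hpow : r ^ (-(1/2) : ℝ) = r * r ^ (-(3/2) : ℝ) := by
      conv_rhs => rw [← Real.rpow_one_add' hr.1.le (by norm_num)]
      norm_num
    rw [hpow, mul_assoc]
    exact hA
  have hi : IntervalIntegrable (fun r : ℝ => r ^ (-(1/2) : ℝ) * L2H h) volume 0 1 :=
    (intervalIntegral.intervalIntegrable_rpow' (by norm_num)).mul_const _
  have := intervalIntegral.norm_integral_le_of_norm_le (zero_le_one' ℝ)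
    (Filter.Eventually.of_forall hb) hi
  rw [intervalIntegral.integral_mul_const, integral_rpow (Or.inl (by norm_num))] at this
  rw [← Real.norm_eq_abs]
  refine this.trans (le_of_eq ?_)
  norm_num

/-! ### The representation formula -/

/-- A weighted average over a horizontal square expressed through averages over the cube standing
on it. Fibrewise this is `φ(0) = ∫₀¹ φ(s) ds - ∫₀¹ (1 - s) φ'(s) ds`. -/
lemma integral_flat_eq (x : Fin 3 → ℝ) {w h : (Fin 3 → ℝ) → ℝ} (hw : Continuous w)
    (hw2 : ∀ y s, w (Function.update y 2 s) = w y) (hh : ContDiff ℝ 1 h) (r : ℝ) :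
    ∫ y in unitCube, w y * h (x + r • flat y) =
      cubeAvg x w h r - r * cubeAvg x (fun y => w y * (1 - y 2)) (pd 2 h) r := by
  have hhc := hh.continuous
  have hpc := pd_continuous hh 2
  have hfl := continuous_flat
  rw [cubeAvg, cubeAvg, ← integral_const_mul, ← integral_sub
    (integrableOn_unitCube (by fun_prop)) (integrableOn_unitCube (by fun_prop))]
  refine setIntegral_unitCube_congr (by fun_prop) (by fun_prop) fun y => ?_
  have hline : ∀ s : ℝ, x + r • Function.update y 2 s =
      (x + r • flat y) + s • (Pi.single 2 r : Fin 3 → ℝ) := by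
    intro s
    ext k
    by_cases hk : k = 2
    · subst hk; simp [flat, mul_comm]
    · simp [flat, hk]
  have hflat : ∀ s : ℝ, flat (Function.update y 2 s) = flat y := by
    intro s; simp [flat]
  simp only [hw2, hflat, Function.update_self]
  set p := x + r • flat y with hp
  have hd : ∀ s : ℝ, HasDerivAt (fun s => h (x + r • Function.update y 2 s))
      (r * pd 2 h (x + r • Function.update y 2 s)) s := by
    intro s
    simp_rw [hline]
    convert hasDerivAt_comp_line hh p (Pi.single 2 r) s using 1
    rw [Finset.sum_eq_single 2]
    · simp
    · intro j _ hj; simp [hj]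
    · simp
  have hd2 : ∀ s ∈ Set.uIcc (0:ℝ) 1, HasDerivAt
      (fun s => -(w y * ((1 - s) * h (x + r • Function.update y 2 s))))
      (w y * h (x + r • Function.update y 2 s) -
        r * (w y * (1 - s) * pd 2 h (x + r • Function.update y 2 s))) s := by
    intro s _
    have h1 : HasDerivAt (fun s : ℝ => 1 - s) (-1) s := by
      simpa using (hasDerivAt_id s).const_sub 1
    exact ((h1.mul (hd s)).const_mul (w y)).neg.congr_deriv (by ring)
  rw [intervalIntegral.integral_eq_sub_of_hasDerivAt hd2
    (Continuous.intervalIntegrable (by fun_prop) _ _)]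
  have h0 : x + r • Function.update y 2 0 = p := rfl
  simp [h0]

/-- Averages integrated over all scales `r ∈ [0,1]`, expressed through the average at scale `1` and
first derivatives. On each ray this is `∫₀¹ φ(r) dr = φ(1) - ∫₀¹ r φ'(r) dr`. -/
lemma integral_cubeAvg_eq (x : Fin 3 → ℝ) {w h : (Fin 3 → ℝ) → ℝ} (hw : Continuous w)
    (hh : ContDiff ℝ 1 h) :
    ∫ r in (0:ℝ)..1, cubeAvg x w h r =
      cubeAvg x w h 1 - ∑ j, ∫ r in (0:ℝ)..1, r * cubeAvg x (fun y => w y * y j) (pd j h) r := by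
  have hhc := hh.continuous
  have hpc := fun j => pd_continuous hh j
  have hswap : ∀ j, ∫ r in (0:ℝ)..1, r * cubeAvg x (fun y => w y * y j) (pd j h) r =
      ∫ y in unitCube, ∫ r in (0:ℝ)..1, r * (w y * y j * pd j h (x + r • y)) := by
    intro j
    simp_rw [cubeAvg, ← integral_const_mul]
    have := hpc j
    exact unitCube_interval_swap (by simp only [Function.uncurry_def]; fun_prop)
  have hci : ∀ j, Continuous
      (fun y => ∫ r in (0:ℝ)..1, r * (w y * y j * pd j h (x + r • y))) := by
    intro j
    have := hpc j
    exact intervalIntegral.continuous_parametric_intervalIntegral_of_continuous'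
      (by simp only [Function.uncurry_def]; fun_prop) _ _
  simp_rw [hswap]
  rw [← integral_finsetSum _ fun j _ => integrableOn_unitCube (hci j)]
  simp only [cubeAvg]
  rw [← integral_sub (integrableOn_unitCube (by fun_prop))
    (integrableOn_unitCube (continuous_finsetSum _ fun j _ => hci j)),
    unitCube_interval_swap (by simp only [Function.uncurry_def]; fun_prop)]
  refine integral_congr_ae (Filter.Eventually.of_forall fun y => ?_)
  have hii : ∀ j, IntervalIntegrable
      (fun r : ℝ => r * (w y * y j * pd j h (x + r • y))) volume 0 1 := by
    intro j
    have := hpc j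
    exact Continuous.intervalIntegrable (by fun_prop) _ _
  simp only
  rw [← intervalIntegral.integral_finsetSum fun j _ => hii j, eq_sub_iff_add_eq,
    ← intervalIntegral.integral_add (Continuous.intervalIntegrable (by fun_prop) _ _)
      (Continuous.intervalIntegrable (continuous_finsetSum _ fun j _ => by
        have := hpc j
        fun_prop) _ _)]
  have hd : ∀ r ∈ Set.uIcc (0:ℝ) 1, HasDerivAt (fun r : ℝ => w y * (r * h (x + r • y)))
      (w y * h (x + r • y) + ∑ j, r * (w y * y j * pd j h (x + r • y))) r := by
    intro r _
    refine (((hasDerivAt_id r).mul (hasDerivAt_comp_line hh x y r)).const_mul (w y)).congr_deriv ?_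
    simp only [Fin.sum_univ_three, id]
    ring
  rw [intervalIntegral.integral_eq_sub_of_hasDerivAt hd]
  · simp
  · refine Continuous.intervalIntegrable ?_ _ _
    refine Continuous.add (by fun_prop) (continuous_finsetSum _ fun j _ => ?_)
    have := hpc j
    fun_prop

/-- Horizontal Taylor step: the value at `x` is a mean over a horizontal square at the height of
`x`, corrected by horizontal first derivatives only. -/
lemma eq_integral_flat (x : Fin 3 → ℝ) {f : (Fin 3 → ℝ) → ℝ} (hf : ContDiff ℝ 1 f) :
    f x = (∫ y in unitCube, 1 * f (x + (1:ℝ) • flat y)) -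
      ∑ i ∈ ({0, 1} : Finset (Fin 3)),
        ∫ r in (0:ℝ)..1, ∫ y in unitCube, y i * pd i f (x + r • flat y) := by
  have hfc := hf.continuous
  have hfl := continuous_flat
  have hpc := fun j => pd_continuous hf j
  have hci : ∀ i, Continuous (fun y : Fin 3 → ℝ =>
      ∫ r in (0:ℝ)..1, y i * pd i f (x + r • flat y)) := by
    intro i
    have := hpc i
    exact intervalIntegral.continuous_parametric_intervalIntegral_of_continuous'
      (by simp only [Function.uncurry_def]; fun_prop) _ _
  have hswap : ∀ i, ∫ r in (0:ℝ)..1, ∫ y in unitCube, y i * pd i f (x + r • flat y) =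
      ∫ y in unitCube, ∫ r in (0:ℝ)..1, y i * pd i f (x + r • flat y) := by
    intro i
    have := hpc i
    exact unitCube_interval_swap (by simp only [Function.uncurry_def]; fun_prop)
  simp_rw [hswap]
  rw [← integral_finsetSum _ fun j _ => integrableOn_unitCube (hci j),
    ← integral_sub (integrableOn_unitCube (by fun_prop))
    (integrableOn_unitCube (continuous_finsetSum _ fun j _ => hci j))]
  have hpt : ∀ y : Fin 3 → ℝ, 1 * f (x + (1:ℝ) • flat y) - ∑ i ∈ ({0, 1} : Finset (Fin 3)),
      ∫ r in (0:ℝ)..1, y i * pd i f (x + r • flat y) = f x := by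
    intro y
    have hii : ∀ j, IntervalIntegrable
        (fun r : ℝ => y j * pd j f (x + r • flat y)) volume 0 1 := by
      intro j
      have := hpc j
      exact Continuous.intervalIntegrable (by fun_prop) _ _
    rw [← intervalIntegral.integral_finsetSum fun j _ => hii j]
    have hd : ∀ r ∈ Set.uIcc (0:ℝ) 1, HasDerivAt (fun r : ℝ => f (x + r • flat y))
        (∑ i ∈ ({0, 1} : Finset (Fin 3)), y i * pd i f (x + r • flat y)) r := by
      intro r _
      convert hasDerivAt_comp_line hf x (flat y) r using 1
      simp [Fin.sum_univ_three, flat]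
    rw [intervalIntegral.integral_eq_sub_of_hasDerivAt hd]
    · simp
    · refine Continuous.intervalIntegrable (continuous_finsetSum _ fun j _ => ?_) _ _
      have := hpc j
      fun_prop
  simp_rw [hpt]
  simp [measureReal_def, volume_unitCube]

/-! ### The estimate -/

lemma L2H_nonneg (g : (Fin 3 → ℝ) → ℝ) : 0 ≤ L2H g := Real.sqrt_nonneg _

lemma abs_coord_le {y : Fin 3 → ℝ} (hy : y ∈ unitCube) (j : Fin 3) : |y j| ≤ 1 := by
  have h0 : 0 ≤ y j := hy.1 j
  have h1 : y j ≤ 1 := hy.2 j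
  rw [abs_le]; constructor <;> linarith

lemma abs_one_sub_coord_le {y : Fin 3 → ℝ} (hy : y ∈ unitCube) (j : Fin 3) : |1 - y j| ≤ 1 := by
  have h0 : 0 ≤ y j := hy.1 j
  have h1 : y j ≤ 1 := hy.2 j
  rw [abs_le]; constructor <;> linarith

/-- The contribution of a horizontal derivative `h = ∂ᵢf` in `eq_integral_flat`: only `h` and its
first derivatives are needed, all in `L²`. -/
lemma abs_integral_flat_le {x : Fin 3 → ℝ} (hx : x ∈ upperHalf) {h : (Fin 3 → ℝ) → ℝ}
    (hh : ContDiff ℝ 1 h) (hc : HasCompactSupport h) {i : Fin 3} (hi : i ≠ 2) :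
    |∫ r in (0:ℝ)..1, ∫ y in unitCube, y i * h (x + r • flat y)| ≤
      L2H h + 4 * ∑ j, L2H (pd j h) := by
  have hwc : Continuous (fun y : Fin 3 → ℝ => y i) := by fun_prop
  have hw2 : ∀ (y : Fin 3 → ℝ) (s : ℝ), Function.update y 2 s i = y i := by
    intro y s; simp [hi]
  have hrc : Continuous
      (fun r => r * cubeAvg x (fun y => y i * (1 - y 2)) (pd 2 h) r) :=
    continuous_id.mul (continuous_cubeAvg x (by fun_prop) (pd_continuous hh 2))
  simp_rw [integral_flat_eq x hwc hw2 hh]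
  rw [intervalIntegral.integral_sub
    ((continuous_cubeAvg x hwc hh.continuous).intervalIntegrable _ _)
    (hrc.intervalIntegrable _ _), integral_cubeAvg_eq x hwc hh]
  have h1 : |cubeAvg x (fun y => y i) h 1| ≤ L2H h := by
    simpa using abs_cubeAvg_le hx hwc (fun y hy => abs_coord_le hy i) hh.continuous hc one_pos
  have h2 : |∑ j, ∫ r in (0:ℝ)..1, r * cubeAvg x (fun y => y i * y j) (pd j h) r| ≤
      ∑ j, 2 * L2H (pd j h) := by
    refine (Finset.abs_sum_le_sum_abs _ _).trans (Finset.sum_le_sum fun j _ => ?_)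
    refine abs_integral_cubeAvg_le hx (by fun_prop) (fun y hy => ?_) (pd_continuous hh j)
      (pd_hasCompactSupport hc j)
    rw [abs_mul]
    exact mul_le_one₀ (abs_coord_le hy i) (abs_nonneg _) (abs_coord_le hy j)
  have h3 : |∫ r in (0:ℝ)..1, r * cubeAvg x (fun y => y i * (1 - y 2)) (pd 2 h) r| ≤
      2 * L2H (pd 2 h) := by
    refine abs_integral_cubeAvg_le hx (by fun_prop) (fun y hy => ?_) (pd_continuous hh 2)
      (pd_hasCompactSupport hc 2)
    rw [abs_mul]
    exact mul_le_one₀ (abs_coord_le hy i) (abs_nonneg _) (abs_one_sub_coord_le hy 2)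
  rw [← Finset.mul_sum] at h2
  have h4 : L2H (pd 2 h) ≤ ∑ j, L2H (pd j h) :=
    Finset.single_le_sum (f := fun j => L2H (pd j h)) (fun j _ => L2H_nonneg _)
      (Finset.mem_univ 2)
  rw [abs_le] at *
  constructor <;> linarith

/-- The contribution of the mean over the horizontal square in `eq_integral_flat`. -/
lemma abs_mean_flat_le {x : Fin 3 → ℝ} (hx : x ∈ upperHalf) {f : (Fin 3 → ℝ) → ℝ}
    (hf : ContDiff ℝ 1 f) (hc : HasCompactSupport f) :
    |∫ y in unitCube, 1 * f (x + (1:ℝ) • flat y)| ≤ L2H f + L2H (pd 2 f) := by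
  rw [integral_flat_eq x (w := fun _ => 1) continuous_const (fun _ _ => rfl) hf]
  have h1 : |cubeAvg x (fun _ => 1) f 1| ≤ L2H f := by
    simpa using abs_cubeAvg_le hx (w := fun _ => 1) continuous_const (by simp) hf.continuous hc
      one_pos
  have h2 : |cubeAvg x (fun y => 1 * (1 - y 2)) (pd 2 f) 1| ≤ L2H (pd 2 f) := by
    have := abs_cubeAvg_le hx (w := fun y => 1 * (1 - y 2)) (by fun_prop)
      (fun y hy => by rw [one_mul]; exact abs_one_sub_coord_le hy 2) (pd_continuous hf 2)
      (pd_hasCompactSupport hc 2) one_pos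
    rwa [Real.one_rpow, one_mul] at this
  rw [abs_le] at *
  constructor <;> linarith

theorem stmt9 :
    ∃ C : ℝ, 0 < C ∧
      ∀ f : (Fin 3 → ℝ) → ℝ, HasCompactSupport f → ContDiff ℝ 2 f →
        ∀ x ∈ upperHalf,
          |f x| ≤ C * (L2H f + (∑ i : Fin 3, L2H (fun y => pd i f y))
            + ∑ i ∈ ({0, 1} : Finset (Fin 3)), ∑ j : Fin 3,
                L2H (fun y => pd j (fun z => pd i f z) y)) := by
  refine ⟨4, by norm_num, fun f hc hf x hx => ?_⟩
  have hf1 : ContDiff ℝ 1 f := hf.of_le (by norm_num)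
  change |f x| ≤ 4 * (L2H f + (∑ i : Fin 3, L2H (pd i f))
            + ∑ i ∈ ({0, 1} : Finset (Fin 3)), ∑ j : Fin 3, L2H (pd j (pd i f)))
  have hm := abs_mean_flat_le hx hf1 hc
  have h0 := abs_integral_flat_le hx (pd_contDiff hf 0) (pd_hasCompactSupport hc 0)
    (i := 0) (by decide)
  have h1 := abs_integral_flat_le hx (pd_contDiff hf 1) (pd_hasCompactSupport hc 1)
    (i := 1) (by decide)
  have hrep := eq_integral_flat x hf1
  rw [Finset.sum_pair (by decide)] at hrep ⊢
  have hs : ∑ i : Fin 3, L2H (pd i f) = L2H (pd 0 f) + L2H (pd 1 f) + L2H (pd 2 f) :=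
    Fin.sum_univ_three _
  have n := L2H_nonneg f
  have n0 := L2H_nonneg (pd 0 f)
  have n1 := L2H_nonneg (pd 1 f)
  have n2 := L2H_nonneg (pd 2 f)
  rw [abs_le] at *
  constructor <;> linarith
end
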